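/- Let G be the graph on {a,b,p,q,x,z} with edges ab, ap, ax, bx, bq, xp, xq, pz, qz (a pentagon a-p-z-q-b-a together with a central vertex x adjacent to a, b, p, q). Then for every s ≥ 2, I(G)^s has linear quotients. -/

import Mathlib

open MvPolynomial

/-- An ideal is generated by a subset of the variables. -/
def genByVars {K : Type*} [Field K] {σ : Type*} (J : Ideal (MvPolynomial σ K)) : Prop :=
  ∃ S : Set σ, J = Ideal.span ((fun i => (X i : MvPolynomial σ K)) '' S)

/-- An equigenerated monomial ideal has linear quotients: there is an ordering of a
minimal monomial generating system (an antichain of exponent vectors) such that each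
successive colon ideal is generated by variables. -/
def HasLinearQuotients {K : Type*} [Field K] {σ : Type*} (I : Ideal (MvPolynomial σ K)) : Prop :=
  ∃ (r : ℕ) (d : Fin r → (σ →₀ ℕ)),
    (∀ i j : Fin r, i ≠ j → ¬ d i ≤ d j) ∧
    Ideal.span (Set.range fun i => (monomial (d i) (1 : K))) = I ∧
    ∀ i : Fin r,
      genByVars (Submodule.colon
        (Ideal.span ((fun j => (monomial (d j) (1 : K))) '' {j | j < i}))
        (Ideal.span {(monomial (d i) (1 : K))}))

/-- A graph is gapfree if any two disjoint edges are joined by an edge meeting both. -/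
def Gapfree {V : Type*} (G : SimpleGraph V) : Prop :=
  ∀ a b c d : V, G.Adj a b → G.Adj c d → ({a, b} : Set V) ∩ {c, d} = ∅ →
    ∃ u v : V, G.Adj u v ∧ (({u, v} : Set V) ∩ {a, b}).Nonempty ∧
      (({u, v} : Set V) ∩ {c, d}).Nonempty

/-- The edge ideal of a graph. -/
noncomputable def edgeIdeal (K : Type*) [Field K] {V : Type*} (G : SimpleGraph V) :
    Ideal (MvPolynomial V K) :=
  Ideal.span {m | ∃ a b : V, G.Adj a b ∧ m = X a * X b}

/-- The graph on `{a,b,p,q,x,z}` (`a=0, b=1, p=2, q=3, x=4, z=5`) with edges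
`ab, ap, ax, bx, bq, xp, xq, pz, qz`: a pentagon `a-p-z-q-b-a` together with a central
vertex `x` adjacent to `a, b, p, q`. -/
def pentagonCentral : SimpleGraph (Fin 6) :=
  SimpleGraph.fromRel (fun i j =>
    (i = 0 ∧ j = 1) ∨ (i = 0 ∧ j = 2) ∨ (i = 0 ∧ j = 4) ∨ (i = 1 ∧ j = 4) ∨
    (i = 1 ∧ j = 3) ∨ (i = 4 ∧ j = 2) ∨ (i = 4 ∧ j = 3) ∨ (i = 2 ∧ j = 5) ∨
    (i = 3 ∧ j = 5))

def InP (s a b p q x z : ℕ) : Prop :=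
  a + b + p + q + x + z = 2 * s ∧ a + q ≤ s ∧ a + z ≤ s ∧ b + p ≤ s ∧ b + z ≤ s ∧ p + q ≤ s ∧
    x + z ≤ s ∧ z ≤ p + q

def lastKey (s a b p : ℕ) : ℕ :=
  if 0 < a then s - p else if b = 0 ∧ p = 0 then s + 1 else p

def KLt (s a b p x z a' b' p' x' z' : ℕ) : Prop :=
  z < z' ∨ z = z' ∧ (x' < x ∨ x = x' ∧ (a' < a ∨ a = a' ∧ (b' < b ∨ b = b' ∧
    lastKey s a b p < lastKey s a' b' p')))

set_option maxHeartbeats 2000000 in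
theorem inP_peel {s a b p q x z : ℕ} (h : InP (s + 1) a b p q x z) :
    (0 < a ∧ 0 < b ∧ InP s (a - 1) (b - 1) p q x z) ∨
    (0 < a ∧ 0 < p ∧ InP s (a - 1) b (p - 1) q x z) ∨
    (0 < a ∧ 0 < x ∧ InP s (a - 1) b p q (x - 1) z) ∨
    (0 < b ∧ 0 < x ∧ InP s a (b - 1) p q (x - 1) z) ∨
    (0 < b ∧ 0 < q ∧ InP s a (b - 1) p (q - 1) x z) ∨
    (0 < x ∧ 0 < p ∧ InP s a b (p - 1) q (x - 1) z) ∨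
    (0 < x ∧ 0 < q ∧ InP s a b p (q - 1) (x - 1) z) ∨
    (0 < p ∧ 0 < z ∧ InP s a b (p - 1) q x (z - 1)) ∨
    (0 < q ∧ 0 < z ∧ InP s a b p (q - 1) x (z - 1)) := by
  by_contra hc
  simp only [not_or] at hc
  obtain ⟨h1, h2, h3, h4, h5, h6, h7, h8, h9⟩ := hc
  unfold InP at h
  have c1 : a = 0 ∨ b = 0 ∨ p + q = s + 1 ∨ x + z = s + 1 := by
    by_contra hn
    refine h1 ?_
    clear h1 h2 h3 h4 h5 h6 h7 h8 h9
    simp only [not_or] at hn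
    unfold InP
    refine ⟨?_, ?_, ?_, ?_, ?_, ?_, ?_, ?_, ?_, ?_⟩ <;> omega
  have c2 : a = 0 ∨ p = 0 ∨ b + z = s + 1 ∨ x + z = s + 1 ∨ z = p + q := by
    by_contra hn
    refine h2 ?_
    clear h1 h2 h3 h4 h5 h6 h7 h8 h9
    simp only [not_or] at hn
    unfold InP
    refine ⟨?_, ?_, ?_, ?_, ?_, ?_, ?_, ?_, ?_, ?_⟩ <;> omega
  have c3 : a = 0 ∨ x = 0 ∨ b + p = s + 1 ∨ b + z = s + 1 ∨ p + q = s + 1 := by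
    by_contra hn
    refine h3 ?_
    clear h1 h2 h3 h4 h5 h6 h7 h8 h9
    simp only [not_or] at hn
    unfold InP
    refine ⟨?_, ?_, ?_, ?_, ?_, ?_, ?_, ?_, ?_, ?_⟩ <;> omega
  have c4 : b = 0 ∨ x = 0 ∨ a + q = s + 1 ∨ a + z = s + 1 ∨ p + q = s + 1 := by
    by_contra hn
    refine h4 ?_
    clear h1 h2 h3 h4 h5 h6 h7 h8 h9
    simp only [not_or] at hn
    unfold InP
    refine ⟨?_, ?_, ?_, ?_, ?_, ?_, ?_, ?_, ?_, ?_⟩ <;> omega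
  have c5 : b = 0 ∨ q = 0 ∨ a + z = s + 1 ∨ x + z = s + 1 ∨ z = p + q := by
    by_contra hn
    refine h5 ?_
    clear h1 h2 h3 h4 h5 h6 h7 h8 h9
    simp only [not_or] at hn
    unfold InP
    refine ⟨?_, ?_, ?_, ?_, ?_, ?_, ?_, ?_, ?_, ?_⟩ <;> omega
  have c6 : x = 0 ∨ p = 0 ∨ a + z = s + 1 ∨ a + q = s + 1 ∨ b + z = s + 1 ∨ z = p + q := by
    by_contra hn
    refine h6 ?_
    clear h1 h2 h3 h4 h5 h6 h7 h8 h9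
    simp only [not_or] at hn
    unfold InP
    refine ⟨?_, ?_, ?_, ?_, ?_, ?_, ?_, ?_, ?_, ?_⟩ <;> omega
  have c7 : x = 0 ∨ q = 0 ∨ a + z = s + 1 ∨ b + p = s + 1 ∨ b + z = s + 1 ∨ z = p + q := by
    by_contra hn
    refine h7 ?_
    clear h1 h2 h3 h4 h5 h6 h7 h8 h9
    simp only [not_or] at hn
    unfold InP
    refine ⟨?_, ?_, ?_, ?_, ?_, ?_, ?_, ?_, ?_, ?_⟩ <;> omega
  have c8 : p = 0 ∨ z = 0 ∨ a + q = s + 1 := by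
    by_contra hn
    refine h8 ?_
    clear h1 h2 h3 h4 h5 h6 h7 h8 h9
    simp only [not_or] at hn
    unfold InP
    refine ⟨?_, ?_, ?_, ?_, ?_, ?_, ?_, ?_, ?_, ?_⟩ <;> omega
  have c9 : q = 0 ∨ z = 0 ∨ b + p = s + 1 := by
    by_contra hn
    refine h9 ?_
    clear h1 h2 h3 h4 h5 h6 h7 h8 h9
    simp only [not_or] at hn
    unfold InP
    refine ⟨?_, ?_, ?_, ?_, ?_, ?_, ?_, ?_, ?_, ?_⟩ <;> omega
  clear h1 h2 h3 h4 h5 h6 h7 h8 h9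
  have hz : z = 0 := by omega
  subst hz
  clear c8 c9
  rcases c1 with c | c | c | c
  · subst c
    rcases Nat.eq_zero_or_pos x with hx | hx
    · omega
    · omega
  · subst c
    rcases Nat.eq_zero_or_pos x with hx | hx
    · omega
    · omega
  · rcases Nat.eq_zero_or_pos x with hx | hx
    · omega
    · omega
  · omega

theorem lvl0 {s a b p q x z a' b' p' q' x' z' : ℕ}  (hs : 2 ≤ s) (hu : InP s a b p q x z)
    (hv : InP s a' b' p' q' x' z') (hz : z' < z)
    (C1 : x' ≤ x) (C2 : a' ≤ a ∨ a + q = s)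
    (C2' : a' ≤ a ∨ q = 0 ∨ a + z = s ∨ z = p + q)
    (C3 : b' ≤ b ∨ b + p = s)
    (C3' : b' ≤ b ∨ p = 0 ∨ b + z = s ∨ z = p + q)
    (C4 : p' ≤ p ∨ b + p = s ∨ p + q = s)
    (C5 : q' ≤ q ∨ a + q = s ∨ p + q = s)
    (C6 : p' ≤ p ∨ q = 0 ∨ b + p = s ∨ ¬ (0 < a ∨ (b = 0 ∧ p = 0)))
    (C7 : q' ≤ q ∨ p = 0 ∨ a + q = s ∨ ¬ (a = 0 ∧ (0 < b ∨ 2 ≤ p))) : False := by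
  unfold InP at *
  rcases C2 with C2 | C2 <;> rcases C3 with C3 | C3 <;> rcases C4 with C4 | C4 | C4 <;>
  rcases C5 with C5 | C5 | C5 <;> omega
theorem lvl1 {s a b p q x z a' b' p' q' x' z' : ℕ}   (hu : InP s a b p q x z)
    (hv : InP s a' b' p' q' x' z') (hz : z' = z) (hx : x < x') :
    (0 < a ∧ InP s (a-1) b p q (x+1) z) ∨ (0 < b ∧ InP s a (b-1) p q (x+1) z) := by
  unfold InP at *
  omega
theorem lvl2 {s a b p q x z a' b' p' q' x' z' : ℕ}   (hu : InP s a b p q x z)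
    (hv : InP s a' b' p' q' x' z') (hz : z' = z) (hx : x = x') (ha : a < a') :
    (0 < b ∧ InP s (a+1) (b-1) p q x z) ∨ (0 < p ∧ InP s (a+1) b (p-1) q x z) ∨
    (0 < q ∧ InP s (a+1) b p (q-1) x z) := by
  unfold InP at *
  omega
theorem lvl3 {s a b p q x z a' b' p' q' x' z' : ℕ}   (hu : InP s a b p q x z)
    (hv : InP s a' b' p' q' x' z') (hz : z' = z) (hx : x = x') (ha : a = a') (hb : b < b') :
    (0 < p ∧ InP s a (b+1) (p-1) q x z) ∨ (0 < q ∧ InP s a (b+1) p (q-1) x z) := by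
  unfold InP at *
  omega

theorem lvl4 {s a b p q x z p' q'  : ℕ} (hs : 2 ≤ s)  (hu : InP s a b p q x z)
    (hv : InP s a b p' q' x z)
    (hk : lastKey s a b p' < lastKey s a b p) :
    (p < p' ∧ 0 < q ∧ InP s a b (p+1) (q-1) x z ∧ lastKey s a b (p+1) < lastKey s a b p) ∨
    (q < q' ∧ 0 < p ∧ InP s a b (p-1) (q+1) x z ∧ lastKey s a b (p-1) < lastKey s a b p) := by
  unfold InP at *
  rcases Nat.eq_zero_or_pos a with ha | ha
  · rcases Nat.eq_zero_or_pos b with hb | hb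
    · subst ha hb
      rcases Nat.eq_zero_or_pos p with hp | hp
      · subst hp
        have : p' ≠ 0 := by rintro rfl; omega
        left
        simp [lastKey]
        omega
      · right
        have hp0 : p ≠ 0 := by omega
        have hp' : p' ≠ 0 := by rintro rfl; simp [lastKey, hp0] at hk; omega
        simp [lastKey, hp0, hp'] at hk ⊢
        have : p - 1 ≠ 0 := by omega
        simp [this]
        omega
    · have hb0 : b ≠ 0 := by omega
      simp [lastKey, ha, hb0] at hk ⊢
      omega
  · simp [lastKey, ha] at hk ⊢
    omega

theorem hlq_of_exchange {K : Type*} [Field K] {σ : Type*} {L : Type*} [LinearOrder L]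
    (P : Finset (σ →₀ ℕ)) (f : (σ →₀ ℕ) → L)
    (hinj : ∀ u ∈ P, ∀ v ∈ P, f u = f v → u = v)
    (hanti : ∀ u ∈ P, ∀ v ∈ P, u ≤ v → u = v)
    (hex : ∀ u ∈ P, ∀ v ∈ P, f v < f u →
      ∃ w ∈ P, f w < f u ∧ ∃ i, u i < v i ∧ w ≤ u + Finsupp.single i 1) :
    HasLinearQuotients (Ideal.span ((fun u => monomial u (1 : K)) '' (P : Set (σ →₀ ℕ)))) := by
  classical
  let T := P.image f
  let e := T.orderIsoOfFin rfl
  have hch : ∀ i, ∃ u ∈ P, f u = (e i : L) := fun i => Finset.mem_image.mp (e i).2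
  choose d hdP hdf using hch
  have hlt : ∀ i j, f (d i) < f (d j) ↔ i < j := by
    intro i j
    rw [hdf, hdf, Subtype.coe_lt_coe, e.lt_iff_lt]
  have hsurj : ∀ u ∈ P, ∃ i, d i = u := by
    intro u hu
    refine ⟨e.symm ⟨f u, Finset.mem_image_of_mem f hu⟩, ?_⟩
    apply hinj _ (hdP _) _ hu
    rw [hdf, OrderIso.apply_symm_apply]
  refine ⟨T.card, d, ?_, ?_, ?_⟩
  · intro i j hij hle
    have := hanti _ (hdP i) _ (hdP j) hle
    apply hij
    apply e.injective
    apply Subtype.ext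
    rw [← hdf, ← hdf, this]
  · congr 1
    ext m
    constructor
    · rintro ⟨i, rfl⟩
      exact ⟨d i, hdP i, rfl⟩
    · rintro ⟨u, hu, rfl⟩
      obtain ⟨i, rfl⟩ := hsurj u hu
      exact ⟨i, rfl⟩
  · intro i
    refine ⟨{k | ∃ j, j < i ∧ d j ≤ d i + Finsupp.single k 1}, ?_⟩
    have himg : ((fun j => (monomial (d j) (1 : K))) '' {j | j < i}) =
        (fun u => monomial u (1 : K)) '' (d '' {j | j < i}) := by
      rw [Set.image_image]
    rw [himg]
    apply le_antisymm
    · intro g hg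
      have hg' : g * monomial (d i) 1 ∈
          Ideal.span ((fun u => monomial u (1 : K)) '' (d '' {j | j < i})) := by
        have := Submodule.mem_colon.mp hg (monomial (d i) 1)
          (Ideal.subset_span (Set.mem_singleton _))
        simpa [smul_eq_mul] using this
      rw [mem_ideal_span_monomial_image] at hg'
      rw [mem_ideal_span_X_image]
      intro m hm
      have hm2 : m + d i ∈ (g * monomial (d i) 1).support := by
        rw [mem_support_iff, coeff_mul_monomial, mul_one]
        exact mem_support_iff.mp hm
      obtain ⟨v, ⟨j, hj, rfl⟩, hle⟩ := hg' _ hm2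
      obtain ⟨w, hwP, hwlt, k, hk, hwle⟩ := hex _ (hdP i) _ (hdP j) ((hlt j i).mpr hj)
      obtain ⟨l, rfl⟩ := hsurj w hwP
      refine ⟨k, ⟨l, (hlt l i).mp hwlt, hwle⟩, ?_⟩
      have := hle k
      rw [Finsupp.add_apply] at this
      omega
    · rw [Ideal.span_le]
      rintro _ ⟨k, ⟨j, hj, hle⟩, rfl⟩
      rw [SetLike.mem_coe, Submodule.mem_colon]
      intro y hy
      obtain ⟨c, rfl⟩ := Ideal.mem_span_singleton'.mp hy
      rw [smul_eq_mul]
      have : (X k : MvPolynomial σ K) * (c * monomial (d i) 1) =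
          c * monomial (d i + Finsupp.single k 1 - d j) 1 * monomial (d j) 1 := by
        rw [mul_assoc, monomial_mul, tsub_add_cancel_of_le hle, X, mul_left_comm, monomial_mul,
          add_comm (d i)]
      rw [this]
      exact Ideal.mul_mem_left _ _ (Ideal.subset_span ⟨d j, ⟨j, hj, rfl⟩, rfl⟩)

def PP (s : ℕ) (u : Fin 6 →₀ ℕ) : Prop := InP s (u 0) (u 1) (u 2) (u 3) (u 4) (u 5)

theorem PP_finite (s : ℕ) : {u | PP s u}.Finite := by
  refine (Set.finite_Iic (Finsupp.equivFunOnFinite.symm (fun _ : Fin 6 => 2 * s))).subset ?_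
  intro u hu
  have hu' : InP s (u 0) (u 1) (u 2) (u 3) (u 4) (u 5) := hu
  unfold InP at hu'
  intro i
  fin_cases i <;> simp <;> omega

/-- the two-vertex exponent vector -/
noncomputable def ed (i j : Fin 6) : Fin 6 →₀ ℕ := Finsupp.single i 1 + Finsupp.single j 1

theorem adj_iff (i j : Fin 6) : pentagonCentral.Adj i j ↔ (i ≠ j ∧
    (((i = 0 ∧ j = 1) ∨ (i = 0 ∧ j = 2) ∨ (i = 0 ∧ j = 4) ∨ (i = 1 ∧ j = 4) ∨
    (i = 1 ∧ j = 3) ∨ (i = 4 ∧ j = 2) ∨ (i = 4 ∧ j = 3) ∨ (i = 2 ∧ j = 5) ∨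
    (i = 3 ∧ j = 5)) ∨ ((j = 0 ∧ i = 1) ∨ (j = 0 ∧ i = 2) ∨ (j = 0 ∧ i = 4) ∨ (j = 1 ∧ i = 4) ∨
    (j = 1 ∧ i = 3) ∨ (j = 4 ∧ i = 2) ∨ (j = 4 ∧ i = 3) ∨ (j = 2 ∧ i = 5) ∨
    (j = 3 ∧ i = 5)))) := Iff.rfl

theorem edgeIdeal_eq (K : Type*) [Field K] : edgeIdeal K pentagonCentral =
    Ideal.span ((fun u => monomial u (1 : K)) '' {u | ∃ i j, pentagonCentral.Adj i j ∧ u = ed i j}) := by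
  unfold edgeIdeal
  congr 1
  ext m
  constructor
  · rintro ⟨i, j, h, rfl⟩
    exact ⟨ed i j, ⟨i, j, h, rfl⟩, by simp [ed, X, monomial_mul]⟩
  · rintro ⟨_, ⟨i, j, h, rfl⟩, rfl⟩
    exact ⟨i, j, h, by simp [ed, X, monomial_mul]⟩

theorem PP_add {s : ℕ} {u : Fin 6 →₀ ℕ} (hu : PP s u) {i j : Fin 6}
    (h : pentagonCentral.Adj i j) : PP (s + 1) (u + ed i j) := by
  unfold PP InP at *
  rw [adj_iff] at h
  obtain ⟨-, h⟩ := h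
  rcases h with h | h <;> rcases h with h | h | h | h | h | h | h | h | h <;>
    obtain ⟨rfl, rfl⟩ := h <;> simp [ed, Finsupp.single_apply] <;> omega

theorem peel_aux {s : ℕ} {u : Fin 6 →₀ ℕ} (i j : Fin 6) (hij : i ≠ j)
    (hi : 0 < u i) (hj : 0 < u j) (h : PP s (u - ed i j)) : 
    PP s (u - ed i j) ∧ u = (u - ed i j) + ed i j := by
  refine ⟨h, ?_⟩
  rw [tsub_add_cancel_of_le]
  intro k
  simp only [ed, Finsupp.add_apply, Finsupp.single_apply]
  split_ifs with h1 h2 h2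
  · exact absurd (h1.trans h2.symm) hij
  · subst h1; omega
  · subst h2; omega
  · omega

theorem PP_peel {s : ℕ} {u : Fin 6 →₀ ℕ} (hu : PP (s + 1) u) :
    ∃ i j, pentagonCentral.Adj i j ∧ ∃ v, PP s v ∧ u = v + ed i j := by
  rcases inP_peel hu with h | h | h | h | h | h | h | h | h <;> obtain ⟨h1, h2, h3⟩ := h
  · exact ⟨0, 1, by simp [adj_iff], _, peel_aux 0 1 (by decide) h1 h2
      (by simpa [PP, ed, Finsupp.single_apply] using h3)⟩
  · exact ⟨0, 2, by simp [adj_iff], _, peel_aux 0 2 (by decide) h1 h2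
      (by simpa [PP, ed, Finsupp.single_apply] using h3)⟩
  · exact ⟨0, 4, by simp [adj_iff], _, peel_aux 0 4 (by decide) h1 h2
      (by simpa [PP, ed, Finsupp.single_apply] using h3)⟩
  · exact ⟨1, 4, by simp [adj_iff], _, peel_aux 1 4 (by decide) h1 h2
      (by simpa [PP, ed, Finsupp.single_apply] using h3)⟩
  · exact ⟨1, 3, by simp [adj_iff], _, peel_aux 1 3 (by decide) h1 h2
      (by simpa [PP, ed, Finsupp.single_apply] using h3)⟩
  · exact ⟨4, 2, by simp [adj_iff], _, peel_aux 4 2 (by decide) h1 h2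
      (by simpa [PP, ed, Finsupp.single_apply] using h3)⟩
  · exact ⟨4, 3, by simp [adj_iff], _, peel_aux 4 3 (by decide) h1 h2
      (by simpa [PP, ed, Finsupp.single_apply] using h3)⟩
  · exact ⟨2, 5, by simp [adj_iff], _, peel_aux 2 5 (by decide) h1 h2
      (by simpa [PP, ed, Finsupp.single_apply] using h3)⟩
  · exact ⟨3, 5, by simp [adj_iff], _, peel_aux 3 5 (by decide) h1 h2
      (by simpa [PP, ed, Finsupp.single_apply] using h3)⟩

theorem pow_eq (K : Type*) [Field K] (s : ℕ) : (edgeIdeal K pentagonCentral) ^ s =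
    Ideal.span ((fun u => monomial u (1 : K)) '' {u | PP s u}) := by
  induction s with
  | zero =>
    have : {u | PP 0 u} = {0} := by
      ext u
      constructor
      · intro hu
        have hu' : InP 0 (u 0) (u 1) (u 2) (u 3) (u 4) (u 5) := hu
        unfold InP at hu'
        ext i
        fin_cases i <;> simp <;> omega
      · rintro rfl
        simp [PP, InP]
    rw [this, pow_zero, Set.image_singleton, Ideal.one_eq_top, eq_comm]
    exact Ideal.span_singleton_eq_top.mpr isUnit_one
  | succ s ih =>
    rw [pow_succ, ih, edgeIdeal_eq, Ideal.span_mul_span']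
    congr 1
    ext m
    rw [Set.mem_mul]
    constructor
    · rintro ⟨_, ⟨u, hu, rfl⟩, _, ⟨_, ⟨i, j, h, rfl⟩, rfl⟩, rfl⟩
      exact ⟨u + ed i j, PP_add hu h, by simp [monomial_mul]⟩
    · rintro ⟨u, hu, rfl⟩
      obtain ⟨i, j, h, v, hv, rfl⟩ := PP_peel hu
      exact ⟨_, ⟨v, hv, rfl⟩, _, ⟨ed i j, ⟨i, j, h, rfl⟩, rfl⟩, by simp [monomial_mul]⟩

/-- The ordering key: `z` up, `x` down, `a` down, `b` down, and a twisted order on `p`. -/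
def keyFn (s : ℕ) (u : Fin 6 →₀ ℕ) : ℕ ×ₗ ℤ ×ₗ ℤ ×ₗ ℤ ×ₗ ℕ :=
  toLex (u 5, toLex (-(u 4 : ℤ), toLex (-(u 0 : ℤ), toLex (-(u 1 : ℤ),
    lastKey s (u 0) (u 1) (u 2)))))

theorem keyFn_lt (s : ℕ) (u v : Fin 6 →₀ ℕ) : keyFn s u < keyFn s v ↔
    KLt s (u 0) (u 1) (u 2) (u 4) (u 5) (v 0) (v 1) (v 2) (v 4) (v 5) := by
  simp [keyFn, KLt, Prod.Lex.toLex_lt_toLex]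

theorem keyFn_inj {s : ℕ} {u v : Fin 6 →₀ ℕ} (hu : PP s u) (hv : PP s v)
    (h : keyFn s u = keyFn s v) : u = v := by
  simp only [keyFn, EmbeddingLike.apply_eq_iff_eq, Prod.mk.injEq, neg_inj, Nat.cast_inj] at h
  obtain ⟨h5, h4, h0, h1, h2⟩ := h
  unfold PP InP at hu hv
  rw [← h0, ← h1] at h2
  have : u 2 = v 2 := by
    unfold lastKey at h2
    split_ifs at h2 <;> omega
  have h3 : u 3 = v 3 := by omega
  ext i
  fin_cases i <;> assumption

theorem PP_anti {s : ℕ} {u v : Fin 6 →₀ ℕ} (hu : PP s u) (hv : PP s v) (h : u ≤ v) : u = v := by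
  have h0 := h 0
  have h1 := h 1
  have h2 := h 2
  have h3 := h 3
  have h4 := h 4
  have h5 := h 5
  unfold PP InP at hu hv
  ext i
  fin_cases i <;> simp <;> omega

/-- the exponent vector obtained by the move `+ i`, `- k` -/
noncomputable def mv (u : Fin 6 →₀ ℕ) (i k : Fin 6) : Fin 6 →₀ ℕ :=
  u + Finsupp.single i 1 - Finsupp.single k 1

theorem mv_apply (u : Fin 6 →₀ ℕ) (i k j : Fin 6) :
    mv u i k j = u j + (if i = j then 1 else 0) - (if k = j then 1 else 0) := by
  simp [mv, Finsupp.single_apply]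

theorem exchange {s : ℕ} (hs : 2 ≤ s) {u v : Fin 6 →₀ ℕ} (hu : PP s u) (hv : PP s v)
    (h : keyFn s v < keyFn s u) :
    ∃ w, PP s w ∧ keyFn s w < keyFn s u ∧ ∃ i, u i < v i ∧ w ≤ u + Finsupp.single i 1 := by
  have key : ∀ i k, u i < v i → PP s (mv u i k) → keyFn s (mv u i k) < keyFn s u →
      ∃ w, PP s w ∧ keyFn s w < keyFn s u ∧ ∃ i, u i < v i ∧ w ≤ u + Finsupp.single i 1 :=
    fun i k h1 h2 h3 => ⟨mv u i k, h2, h3, i, h1, tsub_le_self⟩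
  rw [keyFn_lt] at h
  have key' : ∀ i k, u i < v i → PP s (mv u i k) →
      KLt s (mv u i k 0) (mv u i k 1) (mv u i k 2) (mv u i k 4) (mv u i k 5)
        (u 0) (u 1) (u 2) (u 4) (u 5) →
      ∃ w, PP s w ∧ keyFn s w < keyFn s u ∧ ∃ i, u i < v i ∧ w ≤ u + Finsupp.single i 1 :=
    fun i k h1 h2 h3 => key i k h1 h2 ((keyFn_lt _ _ _).mpr h3)
  clear key
  simp only [PP, mv_apply] at key'
  have hu0 : InP s (u 0) (u 1) (u 2) (u 3) (u 4) (u 5) := hu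
  have hv0 : InP s (v 0) (v 1) (v 2) (v 3) (v 4) (v 5) := hv
  have hu1 := hu0
  have hv1 := hv0
  unfold InP at hu1 hv1
  rcases h with h | ⟨h5, h | ⟨h4, h | ⟨h0, h | ⟨h1, h⟩⟩⟩⟩
  · by_contra hne
    refine lvl0 hs hu0 hv0 h ?_ ?_ ?_ ?_ ?_ ?_ ?_ ?_ ?_
    · by_contra hn
      exact hne (key' 4 5 (by omega) (by simp [InP]; omega) (Or.inl (by simp; omega)))
    · by_contra hn
      exact hne (key' 0 5 (by omega) (by simp [InP]; omega) (Or.inl (by simp; omega)))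
    · by_contra hn
      exact hne (key' 0 3 (by omega) (by simp [InP]; omega) (by simp [KLt]))
    · by_contra hn
      exact hne (key' 1 5 (by omega) (by simp [InP]; omega) (Or.inl (by simp; omega)))
    · by_contra hn
      exact hne (key' 1 2 (by omega) (by simp [InP]; omega) (by simp [KLt]))
    · by_contra hn
      exact hne (key' 2 5 (by omega) (by simp [InP]; omega) (Or.inl (by simp; omega)))
    · by_contra hn
      exact hne (key' 3 5 (by omega) (by simp [InP]; omega) (Or.inl (by simp; omega)))
    · by_contra hn
      refine hne (key' 2 3 (by omega) (by simp [InP]; omega) ?_)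
      simp only [not_or, not_not] at hn
      have : lastKey s (u 0) (u 1) (u 2 + 1) < lastKey s (u 0) (u 1) (u 2) := by
        obtain ⟨_, _, _, hn⟩ := hn
        rcases Nat.eq_zero_or_pos (u 0) with ha | ha
        · have hb : u 1 = 0 := by omega
          have hp : u 2 = 0 := by omega
          simp [lastKey, ha, hb, hp]
          omega
        · simp [lastKey, ha]
          omega
      simpa [KLt] using this
    · by_contra hn
      refine hne (key' 3 2 (by omega) (by simp [InP]; omega) ?_)
      simp only [not_or, not_not] at hn
      have : lastKey s (u 0) (u 1) (u 2 - 1) < lastKey s (u 0) (u 1) (u 2) := by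
        unfold lastKey
        split_ifs <;> omega
      simpa [KLt] using this
  · rcases lvl1 hu0 hv0 h5 h with ⟨_, hw⟩ | ⟨_, hw⟩
    · exact key' 4 0 h (by simpa using hw) (by simp [KLt])
    · exact key' 4 1 h (by simpa using hw) (by simp [KLt])
  · rcases lvl2 hu0 hv0 h5 h4.symm h with ⟨_, hw⟩ | ⟨_, hw⟩ | ⟨_, hw⟩
    · exact key' 0 1 h (by simpa using hw) (by simp [KLt])
    · exact key' 0 2 h (by simpa using hw) (by simp [KLt])
    · exact key' 0 3 h (by simpa using hw) (by simp [KLt])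
  · rcases lvl3 hu0 hv0 h5 h4.symm h0.symm h with ⟨_, hw⟩ | ⟨_, hw⟩
    · exact key' 1 2 h (by simpa using hw) (by simp [KLt])
    · exact key' 1 3 h (by simpa using hw) (by simp [KLt])
  · rw [h5, h4, h0, h1] at hv0
    rw [h0, h1] at h
    rcases lvl4 hs hu0 hv0 h with ⟨hi, _, hw, hl⟩ | ⟨hi, _, hw, hl⟩
    · exact key' 2 3 hi (by simpa using hw) (by simpa [KLt] using hl)
    · exact key' 3 2 hi (by simpa using hw) (by simpa [KLt] using hl)

/-- for every `s ≥ 2`, `I(G)^s` has linear quotients, where `G` is the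
pentagon `a-p-z-q-b-a` together with a central vertex `x` adjacent to `a, b, p, q`. -/
theorem stmt14 {K : Type*} [Field K] (s : ℕ) (hs : 2 ≤ s) :
    HasLinearQuotients ((edgeIdeal K pentagonCentral) ^ s) := by
  rw [pow_eq]
  have hf := PP_finite s
  have hmem : ∀ u, u ∈ hf.toFinset ↔ PP s u := fun u => hf.mem_toFinset
  rw [← hf.coe_toFinset]
  refine hlq_of_exchange (K := K) hf.toFinset (keyFn s) ?_ ?_ ?_
  · intro u hu v hv h
    exact keyFn_inj ((hmem u).mp hu) ((hmem v).mp hv) h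
  · intro u hu v hv h
    exact PP_anti ((hmem u).mp hu) ((hmem v).mp hv) h
  · intro u hu v hv h
    obtain ⟨w, hw, hr⟩ := exchange hs ((hmem u).mp hu) ((hmem v).mp hv) h
    exact ⟨w, (hmem w).mpr hw, hr⟩
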